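/- Let G be a simple graph on Fin N, let θ : Fin N → ℝ be a completely degenerate equilibrium of the identical Kuramoto system on G, and let j, k be adjacent vertices with θ k ≡ θ j + π/2 (mod 2π). For x ∈ ℝ define θ^x by θ^x_j = θ j + x, θ^x_k = θ k − x, and θ^x_h = θ h for h ∉ {j,k}. Then for every x, E(θ) − E(θ^x) = sin(2x) − 2·sin(x), where E is the energy E(φ) = (1/2)·∑_{p,q} a(p,q)·(1 − cos(φ p − φ q)). -/

import Mathlib

open Real

open Classical in
/-- Adjacency indicator: `1` if `j` and `k` are adjacent in `G`, `0` otherwise. -/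
noncomputable def adjInd {V : Type*} (G : SimpleGraph V) (j k : V) : ℝ :=
  if G.Adj j k then 1 else 0

/-- A completely degenerate equilibrium of the identical Kuramoto system on `G`. -/
def IsCDE {V : Type*} [Fintype V] (G : SimpleGraph V) (θ : V → ℝ) : Prop :=
  (∀ k, ∑ j, adjInd G j k * Real.sin (θ j - θ k) = 0) ∧
  (∀ j k, G.Adj j k → Real.cos (θ j - θ k) = 0)

/-- The energy of the identical Kuramoto system (sum over ordered pairs, halved). -/
noncomputable def energy {N : ℕ} (G : SimpleGraph (Fin N)) (φ : Fin N → ℝ) : ℝ :=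
  (1 / 2) * ∑ p, ∑ q, adjInd G p q * (1 - Real.cos (φ p - φ q))

/-- for a completely degenerate equilibrium `θ` and adjacent `j, k` with
`θ k ≡ θ j + π/2 (mod 2π)`, perturbing `θ j` by `+x` and `θ k` by `−x` changes the energy by
`E(θ) − E(θ^x) = sin(2x) − 2·sin x`. -/
theorem stmt12 {N : ℕ} (G : SimpleGraph (Fin N)) (θ : Fin N → ℝ) (hθ : IsCDE G θ)
    (j k : Fin N) (hjk : G.Adj j k)
    (hphase : ∃ m : ℤ, θ k = θ j + π / 2 + 2 * π * m) (x : ℝ) :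
    energy G θ -
        energy G (fun h => if h = j then θ j + x else if h = k then θ k - x else θ h) =
      Real.sin (2 * x) - 2 * Real.sin x := by
  obtain ⟨m, hm⟩ := hphase
  obtain ⟨h1, h2⟩ := hθ
  have hne : j ≠ k := hjk.ne
  have hsymm : ∀ p q, adjInd G p q = adjInd G q p := by
    intro p q
    have e := G.adj_comm p q
    by_cases h : G.Adj p q
    · simp [adjInd, h, e.mp h]
    · simp [adjInd, h, mt e.mpr h]
  have hs : Real.sin (θ k - θ j) = 1 := by
    have e : θ k - θ j = π / 2 + m * (2 * π) := by rw [hm]; ring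
    rw [e, Real.sin_add_int_mul_two_pi, Real.sin_pi_div_two]
  have hs' : Real.sin (θ j - θ k) = -1 := by
    rw [← neg_sub, Real.sin_neg, hs]
  set d : Fin N → ℝ := fun h => if h = j then 1 else if h = k then -1 else 0 with hd
  set c : ℝ := Real.sin (2 * x) - 2 * Real.sin x with hc
  have hφ : (fun h => if h = j then θ j + x else if h = k then θ k - x else θ h)
      = fun h => θ h + d h * x := by
    funext h
    simp only [hd]
    split_ifs with a b
    · subst a; ring
    · subst b; ring
    · ring
  have key : ∀ p q, adjInd G p q * (1 - Real.cos (θ p - θ q))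
      - adjInd G p q * (1 - Real.cos ((θ p + d p * x) - (θ q + d q * x)))
      = d p * (Real.sin x * (adjInd G q p * Real.sin (θ q - θ p)))
        + d q * (Real.sin x * (adjInd G p q * Real.sin (θ p - θ q)))
        + ((if p = j then (if q = k then c else 0) else 0)
        + (if p = k then (if q = j then c else 0) else 0)) := by
    intro p q
    by_cases hpq : G.Adj p q
    · have ha : adjInd G p q = 1 := by simp [adjInd, hpq]
      have hn : p ≠ q := hpq.ne
      have hcos : Real.cos ((θ p + d p * x) - (θ q + d q * x))
          = - (Real.sin (θ p - θ q) * Real.sin ((d p - d q) * x)) := by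
        have e : (θ p + d p * x) - (θ q + d q * x) = (θ p - θ q) + (d p - d q) * x := by ring
        rw [e, Real.cos_add, h2 p q hpq]; ring
      have hanti : Real.sin (θ q - θ p) = - Real.sin (θ p - θ q) := by
        rw [← neg_sub, Real.sin_neg]
      rw [hsymm q p, ha, h2 p q hpq, hcos, hanti]
      by_cases pj : p = j
      · subst pj
        by_cases qk : q = k
        · subst qk
          have e : (1 - (-1 : ℝ)) * x = 2 * x := by ring
          simp [hd, hne, hne.symm, hs', hc, e]
          ring_nf
        · simp [hd, hne, hn.symm, qk]
          try ring
      · by_cases pk : p = k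
        · subst pk
          by_cases qj : q = j
          · subst qj
            have e : ((-1 : ℝ) - 1) * x = -(2 * x) := by ring
            simp only [hd, hne, hne.symm, hs, hc, e, if_true, if_false, Real.sin_neg]
            ring
          · simp [hd, hne.symm, hn.symm, qj]
            try ring
        · by_cases qj : q = j
          · subst qj
            simp [hd, pj, pk]
            try ring
          · by_cases qk : q = k
            · subst qk
              simp [hd, pj, pk, qj]
              ring
            · simp [hd, pj, pk, qj, qk]
    · have ha : adjInd G p q = 0 := by simp [adjInd, hpq]
      have n1 : ¬ (p = j ∧ q = k) := by rintro ⟨rfl, rfl⟩; exact hpq hjk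
      have n2 : ¬ (p = k ∧ q = j) := by rintro ⟨rfl, rfl⟩; exact hpq hjk.symm
      rw [hsymm q p, ha]
      simp only [← ite_and, n1, n2, if_false]
      ring
  rw [hφ]
  unfold energy
  rw [← mul_sub, ← Finset.sum_sub_distrib]
  simp_rw [← Finset.sum_sub_distrib, key, Finset.sum_add_distrib]
  have s1 : ∑ p, ∑ q, d p * (Real.sin x * (adjInd G q p * Real.sin (θ q - θ p))) = 0 := by
    simp_rw [← Finset.mul_sum, h1]; simp
  have s2 : ∑ p, ∑ q, d q * (Real.sin x * (adjInd G p q * Real.sin (θ p - θ q))) = 0 := by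
    rw [Finset.sum_comm]; exact s1
  have s3 : ∀ a b : Fin N, ∑ p, ∑ q, (if p = a then (if q = b then c else 0) else 0) = c := by
    intro a b
    rw [Finset.sum_eq_single a]
    · simp
    · intro p _ hp; simp [hp]
    · simp
  rw [s1, s2, s3, s3]
  ring
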